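/- Let n ≥ 1 be an integer, 0 < α < n, and 1 < p < n/α. Then there exists a constant C > 0 such that for every x ∈ ℝ^n, every r > 0, and every function f locally in L^p(ℝ^n), one has ∫_{ℝ^n ∖ B(x,2r)} |f(z)| |z−x|^{α−n} dz ≤ C ∫_{2r}^∞ t^{α − n/p − 1} ‖f‖_{L^p(B(x,t))} dt. -/

import Mathlib

/-!
For `z ≠ x` the kernel is a superposition of indicator functions of balls:
`|z - x|^(α-n) = (n - α) ∫_{|z-x|}^∞ t^(α-n-1) dt` (`lintegral_tail`). Inserting this and exchanging
the integrals, the left-hand side is at most `(n - α) ∫_{2r}^∞ t^(α-n-1) ∫_{B(x,t)} |f| dz dt`.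
Hölder's inequality on the ball (`lintegral_ball_le`) bounds the inner integral by
`|B(0,1)|^(1-1/p) t^(n-n/p) ‖f‖_{L^p(B(x,t))}`, and the powers of `t` multiply to `t^(α-n/p-1)`.
The constant is therefore `C = (n - α) |B(0,1)|^(1-1/p)`.
-/

open MeasureTheory Metric ENNReal

/-- The `L^p` norm of `f` over the ball `B(x,t)`. -/
noncomputable def ballLpNorm {n : ℕ} (p : ℝ) (f : EuclideanSpace ℝ (Fin n) → ℝ)
    (x : EuclideanSpace ℝ (Fin n)) (t : ℝ) : ℝ≥0∞ :=
  (∫⁻ y in ball x t, ENNReal.ofReal (|f y| ^ p)) ^ (1 / p)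

lemma lintegral_tail {b d : ℝ} (hb : 0 < b) (hd : 0 < d) :
    ∫⁻ t in Set.Ioi d, ENNReal.ofReal (b * t ^ (-b - 1)) = ENNReal.ofReal (d ^ (-b)) := by
  have hlt : -b - 1 < -1 := by linarith
  rw [← ofReal_integral_eq_lintegral_ofReal]
  · rw [integral_const_mul, integral_Ioi_rpow_of_lt hlt hd]
    congr 1
    have : -b - 1 + 1 = -b := by ring
    rw [this]
    field_simp
  · exact (integrableOn_Ioi_rpow_of_lt hlt hd).const_mul b
  · filter_upwards [ae_restrict_mem measurableSet_Ioi] with t ht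
    have : 0 < t := hd.trans ht
    positivity

/-- Hölder's inequality for `f · 1` on `B(x,t)`, with `|B(x,t)| = |B(0,1)| t^n`. -/
lemma lintegral_ball_le {n : ℕ} {p : ℝ} (hp : 1 < p)
    {f : EuclideanSpace ℝ (Fin n) → ℝ} (hf : Measurable f) (x : EuclideanSpace ℝ (Fin n))
    {t : ℝ} (ht : 0 < t) :
    ∫⁻ y in ball x t, ENNReal.ofReal |f y| ≤
      ENNReal.ofReal ((volume (ball (0 : EuclideanSpace ℝ (Fin n)) 1)).toReal ^ (1 - 1 / p) *
        t ^ ((n : ℝ) - n / p)) * ballLpNorm p f x t := by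
  have hpq : p.HolderConjugate (p.conjExponent) := Real.HolderConjugate.conjExponent hp
  have hp0 : 0 < p := by linarith
  have h := ENNReal.lintegral_mul_le_Lp_mul_Lq (volume.restrict (ball x t)) hpq
    (f := fun y => ENNReal.ofReal |f y|) (g := fun _ => 1)
    (by fun_prop) (by fun_prop)
  have hq : 1 / p.conjExponent = 1 - 1 / p := by
    have := hpq.inv_add_inv_eq_one
    simp only [one_div]; linarith
  have hs : 0 ≤ 1 - 1 / p := by rw [← hq]; exact one_div_nonneg.2 hpq.symm.nonneg
  have hvol : volume (ball x t) ^ (1 - 1 / p) =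
      ENNReal.ofReal ((volume (ball (0 : EuclideanSpace ℝ (Fin n)) 1)).toReal ^ (1 - 1 / p) *
        t ^ ((n : ℝ) - n / p)) := by
    rw [Measure.addHaar_ball_of_pos _ _ ht, finrank_euclideanSpace_fin,
      ← ENNReal.ofReal_toReal (measure_ball_lt_top (x := (0 : EuclideanSpace ℝ (Fin n)))
        (r := 1) (μ := volume)).ne, ← ENNReal.ofReal_mul (by positivity),
      ENNReal.ofReal_rpow_of_nonneg (by positivity) hs, ENNReal.toReal_ofReal (by positivity),
      Real.mul_rpow (by positivity) (by positivity), ← Real.rpow_natCast, ← Real.rpow_mul ht.le,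
      mul_comm]
    congr 3
    ring
  simp only [Pi.mul_apply, mul_one, ENNReal.one_rpow, lintegral_const, one_mul,
    Measure.restrict_apply_univ, hq, hvol] at h
  rw [mul_comm, ballLpNorm]
  refine h.trans_eq ?_
  congr 3
  funext y
  rw [ENNReal.ofReal_rpow_of_nonneg (abs_nonneg _) hp0.le]

theorem stmt13 (n : ℕ) (hn : 1 ≤ n) (α p : ℝ)
    (hα : 0 < α ∧ α < (n : ℝ)) (hp : 1 < p ∧ p < (n : ℝ) / α) :
    ∃ C > (0 : ℝ), ∀ (x : EuclideanSpace ℝ (Fin n)) (r : ℝ), 0 < r →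
      ∀ f : EuclideanSpace ℝ (Fin n) → ℝ, Measurable f →
      (∀ (x' : EuclideanSpace ℝ (Fin n)) (t : ℝ), 0 < t →
        (∫⁻ y in ball x' t, ENNReal.ofReal (|f y| ^ p)) < ⊤) →
      (∫⁻ z in (ball x (2 * r))ᶜ, ENNReal.ofReal (|f z| * dist z x ^ (α - (n : ℝ)))) ≤
        ENNReal.ofReal C *
          ∫⁻ t in Set.Ioi (2 * r),
            ENNReal.ofReal (t ^ (α - (n : ℝ) / p - 1)) * ballLpNorm p f x t := by
  set ω : ℝ := (volume (ball (0 : EuclideanSpace ℝ (Fin n)) 1)).toReal with hω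
  have hω0 : 0 < ω := ENNReal.toReal_pos (measure_ball_pos _ _ one_pos).ne' measure_ball_lt_top.ne
  set b : ℝ := n - α with hb
  have hb0 : 0 < b := by linarith [hα.2]
  refine ⟨b * ω ^ (1 - 1 / p), by positivity, fun x r hr f hf _ => ?_⟩
  set K : EuclideanSpace ℝ (Fin n) → ℝ → ℝ≥0∞ := fun z t =>
    ENNReal.ofReal (b * t ^ (-b - 1)) * (ball x t).indicator (fun y => ENNReal.ofReal |f y|) z
    with hK
  have hKm : Measurable (Function.uncurry K) := by
    have hS : MeasurableSet {q : EuclideanSpace ℝ (Fin n) × ℝ | dist q.1 x < q.2} :=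
      measurableSet_lt (by fun_prop) (by fun_prop)
    have h1 : Measurable fun q : EuclideanSpace ℝ (Fin n) × ℝ => ENNReal.ofReal |f q.1| := by
      fun_prop
    have h2 : Measurable fun q : EuclideanSpace ℝ (Fin n) × ℝ =>
        ENNReal.ofReal (b * q.2 ^ (-b - 1)) := by fun_prop
    exact h2.mul (h1.indicator hS)
  calc
    _ = ∫⁻ z in (ball x (2 * r))ᶜ, ∫⁻ t in Set.Ioi (2 * r), K z t := by
      refine setLIntegral_congr_fun measurableSet_ball.compl fun z hz => ?_
      have hz' : 2 * r ≤ dist z x := by simpa using hz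
      have hd : 0 < dist z x := by linarith
      have e : ∀ t, K z t = (Set.Ioi (dist z x)).indicator
          (fun t => ENNReal.ofReal |f z| * ENNReal.ofReal (b * t ^ (-b - 1))) t := by
        intro t
        by_cases h : dist z x < t
        · simp [hK, h, mul_comm]
        · simp [hK, h]
      simp only [e]
      rw [lintegral_indicator measurableSet_Ioi, Measure.restrict_restrict measurableSet_Ioi,
        Set.inter_eq_left.2 (Set.Ioi_subset_Ioi hz'), lintegral_const_mul _ (by fun_prop),
        lintegral_tail hb0 hd, ENNReal.ofReal_mul (abs_nonneg _), hb, neg_sub]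
    _ = ∫⁻ t in Set.Ioi (2 * r), ∫⁻ z in (ball x (2 * r))ᶜ, K z t :=
      lintegral_lintegral_swap hKm.aemeasurable
    _ ≤ ∫⁻ t in Set.Ioi (2 * r), ENNReal.ofReal (b * ω ^ (1 - 1 / p)) *
          (ENNReal.ofReal (t ^ (α - (n : ℝ) / p - 1)) * ballLpNorm p f x t) := by
      refine setLIntegral_mono' measurableSet_Ioi fun t ht => ?_
      have ht0 : 0 < t := lt_trans (by positivity) ht
      calc
        _ ≤ ∫⁻ z, K z t := setLIntegral_le_lintegral _ _
        _ = ENNReal.ofReal (b * t ^ (-b - 1)) * ∫⁻ z in ball x t, ENNReal.ofReal |f z| := by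
          rw [← lintegral_indicator measurableSet_ball,
            ← lintegral_const_mul' _ _ ENNReal.ofReal_ne_top]
        _ ≤ ENNReal.ofReal (b * t ^ (-b - 1)) * (ENNReal.ofReal (ω ^ (1 - 1 / p) *
              t ^ ((n : ℝ) - n / p)) * ballLpNorm p f x t) := by
          gcongr
          exact lintegral_ball_le hp.1 hf x ht0
        _ = _ := by
          rw [← mul_assoc, ← mul_assoc, ← ENNReal.ofReal_mul (by positivity),
            ← ENNReal.ofReal_mul (by positivity)]
          congr 2
          have : t ^ (α - (n : ℝ) / p - 1) = t ^ (-b - 1) * t ^ ((n : ℝ) - n / p) := by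
            rw [← Real.rpow_add ht0, hb]
            congr 1
            ring
          rw [this]
          ring
    _ = _ := lintegral_const_mul' _ _ ENNReal.ofReal_ne_top
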